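/- arXiv:math/0608328 — 2 statements merged into one kernel-verified Lean document; each statement's English description precedes it below -/
import Mathlib

section
/- Let p > 3 be a prime and let r be an integer with 1 ≤ r ≤ p−1. Then (−1)^{r+1}·binom(2p−1, p−r−1) ≡ −2p²·H_r² + 2p·H_r − 1 (mod p³). -/
open Finset

/-- `x ≡ y (mod p^c)` for rationals: `x = y` or the `p`-adic valuation of `x - y`
is at least `c`. -/
def modCong (p : ℕ) (c : ℤ) (x y : ℚ) : Prop :=
  x = y ∨ c ≤ padicValRat p (x - y)

/-- Harmonic number `H_r = ∑_{k=1}^r 1/k`. -/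
def harm (r : ℕ) : ℚ := ∑ k ∈ Finset.Icc 1 r, 1/(k:ℚ)

/-!
Put `b r = (-1) ^ r * (2p - 1).choose (p - r - 1)`. Consecutive terms satisfy
`b r * (1 - p / (r + 1)) = b (r + 1) * (1 + p / (r + 1))`, and since
`log ((1 - x) / (1 + x)) = -2 x + O(x ^ 3)` has no quadratic term, modulo `p ^ 3` this is the
recurrence satisfied by `exp (-2 p H_r)` truncated in degree two. The two sequences are compared by
descending induction from `r = p - 1`, where `b r = 1` and `H_{p-1} ≡ 0 (mod p ^ 2)` by
Wolstenholme's theorem.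
-/

lemma natCast_zmod_ne_zero {p k : ℕ} (hk : k ∈ Ico 1 p) : (k : ZMod p) ≠ 0 := by
  rw [Ne, ZMod.natCast_eq_zero_iff]
  exact Nat.not_dvd_of_pos_of_lt (mem_Ico.1 hk).1 (mem_Ico.1 hk).2

section LocalIntegers

/-- The localization `ℤ_(p)` of `ℤ` at the prime ideal `(p)`, as a subring of `ℚ`. Reduction modulo
`p` on it is the cast `ℚ → ZMod p`, which is not additive on all of `ℚ`. -/
abbrev localIntegers (p : ℕ) [Fact p.Prime] : Subring ℚ := (Rat.padicValuation p).integer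

variable {p : ℕ} [Fact p.Prime]

lemma mem_localIntegers_iff_den {x : ℚ} : x ∈ localIntegers p ↔ (x.den : ZMod p) ≠ 0 := by
  rw [Valuation.mem_integer_iff, Rat.padicValuation_le_one_iff, Ne, ZMod.natCast_eq_zero_iff]

lemma mem_localIntegers_iff_padicValRat {x : ℚ} (hx : x ≠ 0) :
    x ∈ localIntegers p ↔ 0 ≤ padicValRat p x := by
  have hval : Rat.padicValuation p x = WithZero.exp (-padicValRat p x) := if_neg hx
  rw [Valuation.mem_integer_iff, hval, ← WithZero.exp_zero, WithZero.exp_le_exp, neg_nonpos]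

lemma inv_mem_localIntegers {x : ℚ} (hx : (x : ZMod p) ≠ 0) : x⁻¹ ∈ localIntegers p := by
  have hnum : (x.num : ZMod p) ≠ 0 := fun h => hx (by rw [Rat.cast_def, h, zero_div])
  have hx0 : x.num ≠ 0 := fun h => hnum (by rw [h, Int.cast_zero])
  rw [mem_localIntegers_iff_den, Rat.den_inv, if_neg hx0]
  rwa [Ne, ZMod.natCast_eq_zero_iff, ← Int.natCast_dvd, ← ZMod.intCast_zmod_eq_zero_iff_dvd]

lemma ratCast_zmod_sum {ι : Type*} {s : Finset ι} {f : ι → ℚ}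
    (hf : ∀ i ∈ s, f i ∈ localIntegers p) :
    ((∑ i ∈ s, f i : ℚ) : ZMod p) = ∑ i ∈ s, (f i : ZMod p) := by
  induction s using Finset.cons_induction with
  | empty => simp
  | cons a s ha ih =>
    obtain ⟨hfa, hfs⟩ := forall_mem_cons ha _ |>.1 hf
    rw [sum_cons, sum_cons, ← ih hfs, Rat.cast_add_of_ne_zero (mem_localIntegers_iff_den.1 hfa)
      (mem_localIntegers_iff_den.1 (Subring.sum_mem _ hfs))]

lemma exists_eq_prime_mul_of_ratCast_zmod_eq_zero {x : ℚ} (hx : x ∈ localIntegers p)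
    (h : (x : ZMod p) = 0) : ∃ z ∈ localIntegers p, x = p * z := by
  have hden := mem_localIntegers_iff_den.1 hx
  have hnum : (x.num : ZMod p) = 0 := by
    rw [Rat.cast_def, div_eq_zero_iff] at h
    exact h.resolve_right hden
  obtain ⟨m, hm⟩ := (ZMod.intCast_zmod_eq_zero_iff_dvd _ _).1 hnum
  refine ⟨m * (x.den : ℚ)⁻¹, mul_mem (intCast_mem _ m)
    (inv_mem_localIntegers (by rwa [Rat.cast_natCast])), ?_⟩
  rw [← mul_assoc, ← div_eq_mul_inv]
  nth_rewrite 1 [← Rat.num_div_den x]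
  rw [hm]
  push_cast
  rfl

lemma ratCast_zmod_one_sub_prime_mul {a : ℚ} (ha : a ∈ localIntegers p) :
    ((1 - p * a : ℚ) : ZMod p) = 1 := by
  have hpa : (p * a : ℚ) ∈ localIntegers p := mul_mem (natCast_mem _ p) ha
  rw [Rat.cast_sub_of_ne_zero (by simp) (mem_localIntegers_iff_den.1 hpa),
    Rat.cast_mul_of_ne_zero (by simp) (mem_localIntegers_iff_den.1 ha), Rat.cast_natCast,
    CharP.cast_eq_zero, zero_mul, sub_zero, Rat.cast_one]

lemma inv_natCast_mem_localIntegers {k : ℕ} (hk : k ∈ Ico 1 p) : (k : ℚ)⁻¹ ∈ localIntegers p :=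
  inv_mem_localIntegers (by rw [Rat.cast_natCast]; exact natCast_zmod_ne_zero hk)

end LocalIntegers

section ModCong

variable {p : ℕ} [hp : Fact p.Prime] {c : ℤ} {x y z u : ℚ}

lemma modCong_iff_exists_sub_eq :
    modCong p c x y ↔ ∃ z ∈ localIntegers p, x - y = (p : ℚ) ^ c * z := by
  have hpc : (p : ℚ) ^ c ≠ 0 := zpow_ne_zero _ (Nat.cast_ne_zero.2 hp.out.ne_zero)
  have hval : padicValRat p ((p : ℚ) ^ c) = c := by
    rw [padicValRat.zpow, padicValRat.self hp.out.one_lt, mul_one]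
  constructor
  · rintro (rfl | h)
    · exact ⟨0, zero_mem _, by simp⟩
    · rcases eq_or_ne (x - y) 0 with hxy | hxy
      · exact ⟨0, zero_mem _, by rw [hxy, mul_zero]⟩
      refine ⟨(x - y) / (p : ℚ) ^ c, ?_, (mul_div_cancel₀ _ hpc).symm⟩
      rw [mem_localIntegers_iff_padicValRat (div_ne_zero hxy hpc), padicValRat.div hxy hpc, hval]
      exact sub_nonneg.2 h
  · rintro ⟨z, hz, h⟩
    rcases eq_or_ne z 0 with rfl | hz0
    · exact Or.inl (by simpa [sub_eq_zero] using h)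
    · refine Or.inr ?_
      rw [h, padicValRat.mul hpc hz0, hval]
      linarith [(mem_localIntegers_iff_padicValRat hz0).1 hz]

lemma modCong.trans (hxy : modCong p c x y) (hyz : modCong p c y z) : modCong p c x z := by
  rw [modCong_iff_exists_sub_eq] at *
  obtain ⟨a, ha, hxy⟩ := hxy
  obtain ⟨b, hb, hyz⟩ := hyz
  exact ⟨a + b, add_mem ha hb, by linear_combination hxy + hyz⟩

lemma modCong.mul_right (h : modCong p c x y) (hu : u ∈ localIntegers p) :
    modCong p c (x * u) (y * u) := by
  rw [modCong_iff_exists_sub_eq] at *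
  obtain ⟨a, ha, h⟩ := h
  exact ⟨a * u, mul_mem ha hu, by linear_combination u * h⟩

lemma modCong.of_mul_right (h : modCong p c (x * u) (y * u)) (hu : (u : ZMod p) ≠ 0) :
    modCong p c x y := by
  have hu0 : u ≠ 0 := by
    rintro rfl
    exact hu Rat.cast_zero
  simpa only [mul_inv_cancel_right₀ hu0] using h.mul_right (inv_mem_localIntegers hu)

end ModCong

section Harmonic

lemma harm_succ (r : ℕ) : harm (r + 1) = harm r + ((r + 1 : ℕ) : ℚ)⁻¹ := by
  rw [harm, sum_Icc_succ_top (by omega), harm, one_div]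

lemma harm_pred_eq_sum_Ico (n : ℕ) : harm (n - 1) = ∑ k ∈ Ico 1 n, (k : ℚ)⁻¹ := by
  have hIcc : Icc 1 (n - 1) = Ico 1 n := by
    ext k
    simp only [mem_Icc, mem_Ico]
    omega
  simp only [harm, hIcc, one_div]

lemma two_mul_harm_pred (n : ℕ) :
    2 * harm (n - 1) = n * ∑ k ∈ Ico 1 n, ((k * (n - k) : ℤ) : ℚ)⁻¹ := by
  have hreflect : ∑ k ∈ Ico 1 n, ((n - k : ℕ) : ℚ)⁻¹ = harm (n - 1) := by
    rw [sum_Ico_reflect (fun k : ℕ => (k : ℚ)⁻¹) 1 n.le_succ, harm_pred_eq_sum_Ico,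
      Nat.add_sub_cancel_left, Nat.add_sub_cancel]
  rw [two_mul]
  nth_rewrite 2 [← hreflect]
  rw [harm_pred_eq_sum_Ico, ← sum_add_distrib, mul_sum]
  refine sum_congr rfl fun k hk => ?_
  obtain ⟨hk1, hkn⟩ := mem_Ico.1 hk
  have hk0 : (k : ℚ) ≠ 0 := by positivity
  have hnk0 : (n - k : ℚ) ≠ 0 := sub_ne_zero.2 (by exact_mod_cast hkn.ne')
  push_cast [Nat.cast_sub hkn.le]
  field_simp
  ring

variable {p : ℕ} [hp : Fact p.Prime]

lemma harm_mem_localIntegers {r : ℕ} (hr : r < p) : harm r ∈ localIntegers p := by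
  refine Subring.sum_mem _ fun k hk => ?_
  rw [one_div]
  refine inv_natCast_mem_localIntegers ?_
  rw [mem_Icc] at hk
  exact mem_Ico.2 ⟨hk.1, by omega⟩

lemma sum_Ico_inv_pow_zmod_eq_zero {i : ℕ} (hi0 : i ≠ 0) (hi : i < p - 1) :
    ∑ k ∈ Ico 1 p, (k : ZMod p)⁻¹ ^ i = 0 := by
  have hsum : ∑ x : ZMod p, x⁻¹ ^ i = 0 := by
    rw [← FiniteField.sum_pow_lt_card_sub_one (ZMod p) i (by rwa [ZMod.card])]
    exact Equiv.sum_comp (Equiv.inv (ZMod p)) fun x => x ^ i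
  have hrange : ∑ k ∈ range p, (k : ZMod p)⁻¹ ^ i = ∑ x : ZMod p, x⁻¹ ^ i :=
    sum_nbij' (fun k => (k : ZMod p)) ZMod.val (by simp) (fun x _ => mem_range.2 x.val_lt)
      (fun k hk => ZMod.val_cast_of_lt (mem_range.1 hk)) (by simp) (by simp)
  rw [range_eq_Ico, sum_eq_sum_Ico_succ_bot hp.out.pos, hsum] at hrange
  simpa [hi0] using hrange

lemma exists_sum_inv_mul_sub_eq_prime_mul (hp3 : 3 < p) :
    ∃ z ∈ localIntegers p, ∑ k ∈ Ico 1 p, ((k * (p - k) : ℤ) : ℚ)⁻¹ = p * z := by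
  have hcast (k : ℕ) : ((k * (p - k) : ℤ) : ZMod p) = -(k : ZMod p) ^ 2 := by
    push_cast
    rw [CharP.cast_eq_zero (ZMod p) p, zero_sub, mul_neg, sq]
  have hne : ∀ k ∈ Ico 1 p, ((k * (p - k) : ℤ) : ZMod p) ≠ 0 := fun k hk => by
    rw [hcast]
    exact neg_ne_zero.2 (pow_ne_zero 2 (natCast_zmod_ne_zero hk))
  have hmem : ∀ k ∈ Ico 1 p, ((k * (p - k) : ℤ) : ℚ)⁻¹ ∈ localIntegers p := fun k hk =>
    inv_mem_localIntegers (by rw [Rat.cast_intCast]; exact hne k hk)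
  have hterm : ∀ k ∈ Ico 1 p,
      ((((k * (p - k) : ℤ) : ℚ)⁻¹ : ℚ) : ZMod p) = -(k : ZMod p)⁻¹ ^ 2 := fun k hk => by
    rw [Rat.cast_inv_of_ne_zero (by rw [Rat.num_intCast]; exact hne k hk), Rat.cast_intCast,
      hcast, inv_neg, inv_pow]
  refine exists_eq_prime_mul_of_ratCast_zmod_eq_zero (Subring.sum_mem _ hmem) ?_
  rw [ratCast_zmod_sum hmem, sum_congr rfl hterm, sum_neg_distrib,
    sum_Ico_inv_pow_zmod_eq_zero two_ne_zero (by omega), neg_zero]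

theorem modCong_harm_pred_prime (hp3 : 3 < p) : modCong p 2 (harm (p - 1)) 0 := by
  obtain ⟨z, hz, hsum⟩ := exists_sum_inv_mul_sub_eq_prime_mul hp3
  have h2 : ((2 : ℕ) : ℚ)⁻¹ ∈ localIntegers p :=
    inv_natCast_mem_localIntegers (mem_Ico.2 ⟨one_le_two, by omega⟩)
  have hdouble := two_mul_harm_pred p
  rw [hsum] at hdouble
  refine modCong_iff_exists_sub_eq.2 ⟨((2 : ℕ) : ℚ)⁻¹ * z, mul_mem h2 hz, ?_⟩
  rw [zpow_ofNat, Nat.cast_ofNat]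
  linear_combination hdouble / 2

end Harmonic

section ExpTrunc

/-- The Taylor polynomial of degree two of `exp (-2 x)`. -/
def expNegTwoTrunc {R : Type*} [CommRing R] (x : R) : R := 1 - 2 * x + 2 * x ^ 2

lemma expNegTwoTrunc_add_mul_one_add {R : Type*} [CommRing R] (x y : R) :
    expNegTwoTrunc (y + x) * (1 + x) =
      expNegTwoTrunc y * (1 - x) + 2 * x * (y ^ 2 + (y + x) ^ 2) := by
  simp only [expNegTwoTrunc]
  ring

variable {p : ℕ} [Fact p.Prime] {a b : ℚ}

lemma modCong_expNegTwoTrunc_add_mul_one_add (ha : a ∈ localIntegers p)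
    (hb : b ∈ localIntegers p) :
    modCong p 3 (expNegTwoTrunc (p * (b + a)) * (1 + p * a))
      (expNegTwoTrunc (p * b) * (1 - p * a)) := by
  refine modCong_iff_exists_sub_eq.2 ⟨2 * a * (b ^ 2 + (b + a) ^ 2),
    mul_mem (mul_mem (ofNat_mem _ 2) ha) (add_mem (pow_mem hb 2) (pow_mem (add_mem hb ha) 2)), ?_⟩
  rw [mul_add (p : ℚ) b, expNegTwoTrunc_add_mul_one_add, zpow_ofNat]
  ring

lemma modCong_one_expNegTwoTrunc (h : modCong p 2 b 0) :
    modCong p 3 1 (expNegTwoTrunc (p * b)) := by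
  obtain ⟨z, hz, hb⟩ := modCong_iff_exists_sub_eq.1 h
  rw [sub_zero, zpow_ofNat] at hb
  refine modCong_iff_exists_sub_eq.2 ⟨2 * z * (1 - p ^ 3 * z), mul_mem (mul_mem (ofNat_mem _ 2) hz)
    (sub_mem (one_mem _) (mul_mem (pow_mem (natCast_mem _ p) 3) hz)), ?_⟩
  rw [hb, expNegTwoTrunc, zpow_ofNat]
  ring

end ExpTrunc

section SignedChoose

/-- The signed binomial coefficient `(-1) ^ r * (2p - 1).choose (p - r - 1)`; the subtractions are
not truncated for `r < p`. -/
def signedChoose (p r : ℕ) : ℚ := (-1) ^ r * (2 * p - 1).choose (p - r - 1)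

lemma signedChoose_mul_one_sub {p r : ℕ} (hr : r + 1 < p) :
    signedChoose p r * (1 - p * ((r + 1 : ℕ) : ℚ)⁻¹) =
      signedChoose p (r + 1) * (1 + p * ((r + 1 : ℕ) : ℚ)⁻¹) := by
  obtain ⟨s, rfl⟩ : ∃ s, p = r + 2 + s := ⟨p - (r + 2), by omega⟩
  have h := Nat.choose_succ_right_eq (2 * (r + 2 + s) - 1) s
  rw [show 2 * (r + 2 + s) - 1 - s = r + 1 + (r + 2 + s) by omega] at h
  have hQ : ((2 * (r + 2 + s) - 1).choose (s + 1) : ℚ) * (s + 1) =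
      (2 * (r + 2 + s) - 1).choose s * (r + 1 + (r + 2 + s)) := by exact_mod_cast h
  rw [signedChoose, signedChoose, show r + 2 + s - r - 1 = s + 1 by omega,
    show r + 2 + s - (r + 1) - 1 = s by omega]
  field_simp
  push_cast
  linear_combination (-(-1 : ℚ) ^ r) * hQ

lemma signedChoose_pred_of_odd {p : ℕ} (hp : Odd p) : signedChoose p (p - 1) = 1 := by
  rw [signedChoose, (hp.tsub_odd odd_one).neg_one_pow, Nat.sub_sub_self hp.pos, Nat.sub_self,
    Nat.choose_zero_right, Nat.cast_one, mul_one]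

lemma modCong_signedChoose_of_succ {p r : ℕ} [Fact p.Prime] (hr : r + 1 < p)
    (h : modCong p 3 (signedChoose p (r + 1)) (expNegTwoTrunc (p * harm (r + 1)))) :
    modCong p 3 (signedChoose p r) (expNegTwoTrunc (p * harm r)) := by
  have ha : ((r + 1 : ℕ) : ℚ)⁻¹ ∈ localIntegers p :=
    inv_natCast_mem_localIntegers (mem_Ico.2 ⟨r.succ_pos, hr⟩)
  have hharm := harm_mem_localIntegers (Nat.lt_of_succ_lt hr)
  have hunit : ((1 - p * ((r + 1 : ℕ) : ℚ)⁻¹ : ℚ) : ZMod p) ≠ 0 := by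
    rw [ratCast_zmod_one_sub_prime_mul ha]
    exact one_ne_zero
  have hfactor : (1 + p * ((r + 1 : ℕ) : ℚ)⁻¹) ∈ localIntegers p :=
    add_mem (one_mem _) (mul_mem (natCast_mem _ p) ha)
  have hstep := h.mul_right hfactor
  rw [← signedChoose_mul_one_sub hr, harm_succ] at hstep
  exact (hstep.trans (modCong_expNegTwoTrunc_add_mul_one_add ha hharm)).of_mul_right hunit

end SignedChoose

theorem stmt0 (p : ℕ) (hp : p.Prime) (hp3 : 3 < p) (r : ℕ) (hr1 : 1 ≤ r) (hr2 : r ≤ p - 1) :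
    modCong p 3 ((-1:ℚ)^(r+1) * ((2*p-1).choose (p-r-1)))
      (-2 * (p:ℚ)^2 * (harm r)^2 + 2 * (p:ℚ) * harm r - 1) := by
  have : Fact p.Prime := ⟨hp⟩
  suffices h : modCong p 3 (signedChoose p r) (expNegTwoTrunc (p * harm r)) by
    convert h.mul_right (neg_mem (one_mem (localIntegers p))) using 1
    · rw [signedChoose]
      ring
    · rw [expNegTwoTrunc]
      ring
  induction hr2 using Nat.decreasingInduction with
  | self =>
    rw [signedChoose_pred_of_odd (hp.odd_of_ne_two (by omega))]
    exact modCong_one_expNegTwoTrunc (modCong_harm_pred_prime hp3)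
  | of_succ r hr ih =>
    exact modCong_signedChoose_of_succ (by omega) (ih r.succ_pos)
end

section
/- Let p be a prime, let r be an integer, and let m,n be nonnegative integers with m ≠ n and m ≡ n (mod p(p−1)). Then (F_p(m,r) − F_p(n,r))/(m − n) ≡ ((−1)^{n^*}/n^*!)·Σ_{k=2}^{n^*} binom(n^*,k)·(B_k/k)·B^{(μ)}_{n^*−k}(−r) (mod p), where μ is the unique integer in {0,…,p−1} with μ ≡ −n (mod p). -/
open Finset

/-- `C_p(n,r) = ∑_{0 ≤ k ≤ n, k ≡ r (mod p)} (-1)^k * binom(n,k)`. -/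
def Cp (p n : ℕ) (r : ℤ) : ℚ :=
  ∑ k ∈ range (n+1), if ((k : ℤ) - r) % p = 0 then (-1 : ℚ)^k * (n.choose k) else 0

/-- The Fleck quotient `F_p(n,r) = (-p)^{-⌊(n-1)/(p-1)⌋} C_p(n,r) + [n = 0]`. -/
noncomputable def Fp (p n : ℕ) (r : ℤ) : ℚ :=
  (-(p:ℚ)) ^ (-(Int.fdiv ((n:ℤ) - 1) ((p:ℤ) - 1))) * Cp p n r + (if n = 0 then 1 else 0)

/-- `n^*`: the unique integer in `{0,…,p-2}` with `n^* ≡ -n (mod p-1)`. -/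
def nUp (p n : ℕ) : ℕ := ((-(n:ℤ)) % ((p:ℤ) - 1)).toNat

/-- The `m`-th order Bernoulli number
`B_k^{(m)} = k! ∑_{i₁+⋯+i_m = k} ∏_j B_{i_j}/i_j!`. -/
noncomputable def bernHigher (m k : ℕ) : ℚ :=
  (k.factorial : ℚ) *
    ∑ i ∈ Finset.Nat.antidiagonalTuple m k, ∏ j, bernoulli (i j) / (i j).factorial

/-- The `m`-th order Bernoulli polynomial
`B_k^{(m)}(t) = ∑_{j=0}^k binom(k,j) B_j^{(m)} t^{k-j}`. -/
noncomputable def bernHigherPoly (m k : ℕ) (t : ℚ) : ℚ :=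
  ∑ j ∈ range (k+1), (k.choose j : ℚ) * bernHigher m j * t^(k-j)

/-!
Put `u = ((1 + X + ⋯ + X ^ (p - 1)) - (1 - X) ^ (p - 1)) / p`. For `i ≥ 1` one has
`(1 - X) ^ (i + (p - 1) j) ≡ (-p) ^ j u ^ j (1 - X) ^ i` modulo `X ^ p - 1`, so the Fleck quotient
at `i + (p - 1) j` is the sum of the coefficients of `u ^ j (1 - X) ^ i` over the residue class of
`r`. The Frobenius lift `X ↦ X ^ p` sends `u` to `u(1) = 1` modulo `X ^ p - 1`; hence
`u ^ p ≡ 1 + p δ` with `δ = (u ^ p - u(X ^ p)) / p`, and replacing `j` by `j + p s` changes the sum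
by `p s` times that of `δ u ^ j (1 - X) ^ i`, up to a multiple of `p ^ 2 s` in `ℤ_(p)`.

By the theorems of Wilson and Fermat, the sum of the coefficients of `f` over the residue class of
`r` is congruent modulo `p` to the sum of the coefficients of `1` and `X ^ (p - 1)` in
`e^(-rX) f(e^X)`. Here `u(e^X)` is congruent to `X / (e^X - 1)`, whose powers generate the
higher-order Bernoulli numbers, and `δ(e^X)` to `-∑_{k ≥ 2} B_k X ^ k / (k * k!)`: this comes from
`log (X / (e^X - 1)) = -X / 2 - ∑_{k ≥ 2} B_k X ^ k / (k * k!)` together with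
`u(e^(pX)) ≡ 1 - p X / 2` modulo `p ^ 2`.
-/

section ResidueSum

open Polynomial

/-- The sum of the coefficients of `f` whose index is congruent to `r` modulo `p`: the linear form
on `ℤ[X]` through which `C_p(n, r)` is read off from `(1 - X) ^ n`. -/
noncomputable def residueSum (p : ℕ) (r : ℤ) : ℤ[X] →ₗ[ℤ] ℤ :=
  Polynomial.lsum fun k => if ((k : ℤ) - r) % p = 0 then LinearMap.id else 0

variable (p : ℕ) (r : ℤ)

lemma residueSum_monomial (k : ℕ) (c : ℤ) :
    residueSum p r (monomial k c) = if ((k : ℤ) - r) % p = 0 then c else 0 := by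
  have h : residueSum p r (monomial k c) =
      (if ((k : ℤ) - r) % p = 0 then LinearMap.id else 0 : ℤ →ₗ[ℤ] ℤ) c :=
    sum_monomial_index c _ (by simp)
  rw [h]
  split_ifs <;> rfl

lemma residueSum_natCast_mul (k : ℕ) (f : ℤ[X]) :
    residueSum p r ((k : ℤ[X]) * f) = k * residueSum p r f := by
  rw [← nsmul_eq_mul, map_nsmul, nsmul_eq_mul]

lemma residueSum_neg_natCast_pow_mul (k j : ℕ) (f : ℤ[X]) :
    residueSum p r ((-(k : ℤ[X])) ^ j * f) = (-(k : ℤ)) ^ j * residueSum p r f := by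
  have h : (-(k : ℤ[X])) ^ j * f = (-(k : ℤ)) ^ j • f := by
    rw [zsmul_eq_mul]
    push_cast
    rfl
  rw [h, map_smul, smul_eq_mul]

lemma residueSum_X_pow_sub_one_mul (f : ℤ[X]) : residueSum p r ((X ^ p - 1) * f) = 0 := by
  induction f using Polynomial.induction_on' with
  | add f g hf hg => rw [mul_add, map_add, hf, hg, add_zero]
  | monomial k c =>
    have hk : ((k + p : ℕ) - r : ℤ) % p = ((k : ℤ) - r) % p := by
      rw [Nat.cast_add, add_sub_right_comm, Int.add_emod_right]
    rw [sub_mul, one_mul, X_pow_mul, monomial_mul_X_pow, map_sub, residueSum_monomial,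
      residueSum_monomial, hk, sub_self]

variable {p} in
lemma residueSum_congr {f g : ℤ[X]} (h : X ^ p - 1 ∣ f - g) :
    residueSum p r f = residueSum p r g := by
  obtain ⟨q, hq⟩ := h
  rw [← sub_eq_zero, ← map_sub, hq, residueSum_X_pow_sub_one_mul]

lemma Cp_eq_residueSum (n : ℕ) : Cp p n r = residueSum p r ((1 - X) ^ n) := by
  have hbinom : ((1 - X) ^ n : ℤ[X]) =
      ∑ k ∈ range (n + 1), monomial k ((-1) ^ k * (n.choose k : ℤ)) := by
    rw [sub_eq_add_neg, add_comm, add_pow]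
    refine sum_congr rfl fun k _ => ?_
    rw [← C_mul_X_pow_eq_monomial, neg_pow]
    simp only [one_pow, map_mul, map_pow, map_neg, map_one, map_natCast]
    ring
  rw [hbinom, map_sum, Cp, Int.cast_sum]
  refine sum_congr rfl fun k _ => ?_
  rw [residueSum_monomial]
  split_ifs <;> simp

lemma residueSum_geom_sum (hp : 0 < p) : residueSum p r (∑ i ∈ range p, X ^ i) = 1 := by
  have hp' : (0 : ℤ) < p := by exact_mod_cast hp
  have hr := Int.emod_nonneg r hp'.ne'
  have hlt := Int.emod_lt_of_pos r hp'
  have hindex (k : ℕ) (hk : k ∈ range p) : ((k : ℤ) - r) % p = 0 ↔ k = (r % p).toNat := by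
    rw [← Int.emod_eq_emod_iff_emod_sub_eq_zero,
      Int.emod_eq_of_lt (by positivity) (by exact_mod_cast mem_range.mp hk)]
    omega
  simp only [map_sum, X_pow_eq_monomial, residueSum_monomial]
  rw [sum_congr rfl fun k hk => if_congr (hindex k hk) rfl rfl, sum_ite_eq',
    if_pos (mem_range.mpr (by omega))]

end ResidueSum

section FrobeniusLifts

open Polynomial

lemma natCast_dvd_of_map_eq_zero {p : ℕ} {f : ℤ[X]}
    (h : f.map (Int.castRingHom (ZMod p)) = 0) : (p : ℤ[X]) ∣ f := by
  rw [← map_natCast C, C_dvd_iff_dvd_coeff]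
  intro i
  rw [← ZMod.intCast_zmod_eq_zero_iff_dvd, ← eq_intCast (Int.castRingHom (ZMod p)), ← coeff_map, h,
    coeff_zero]

lemma X_pow_sub_one_dvd_expand_sub_C (p : ℕ) (f : ℤ[X]) :
    X ^ p - 1 ∣ expand ℤ p f - C (f.eval 1) := by
  simpa using map_dvd (expand ℤ p) (X_sub_C_dvd_sub_C_eval (a := 1) (p := f))

variable (p : ℕ) [hp : Fact p.Prime]

lemma natCast_dvd_pow_sub_expand (f : ℤ[X]) : (p : ℤ[X]) ∣ f ^ p - expand ℤ p f :=
  natCast_dvd_of_map_eq_zero <| by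
    rw [Polynomial.map_sub, Polynomial.map_pow, map_expand, ZMod.expand_card, sub_self]

lemma natCast_dvd_geom_sum_sub_one_sub_X_pow :
    (p : ℤ[X]) ∣ ∑ i ∈ range p, X ^ i - (1 - X) ^ (p - 1) := by
  refine natCast_dvd_of_map_eq_zero (mul_left_cancel₀ (a := 1 - X) ?_ ?_)
  · exact sub_ne_zero.mpr (X_ne_C 1).symm
  · simp only [Polynomial.map_sub, Polynomial.map_sum, Polynomial.map_pow, map_X,
      Polynomial.map_one]
    rw [mul_sub, mul_neg_geom_sum, mul_pow_sub_one hp.out.ne_zero, sub_pow_char, one_pow, sub_self,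
      mul_zero]

/-- The polynomial `(f ^ p - f(X ^ p)) / p`, measuring how far `f ↦ f(X ^ p)` is from the
`p`-th power map. -/
noncomputable def frobeniusDelta (f : ℤ[X]) : ℤ[X] := (natCast_dvd_pow_sub_expand p f).choose

lemma natCast_mul_frobeniusDelta (f : ℤ[X]) :
    (p : ℤ[X]) * frobeniusDelta p f = f ^ p - expand ℤ p f :=
  (natCast_dvd_pow_sub_expand p f).choose_spec.symm

/-- The polynomial `u` with `1 + X + ⋯ + X ^ (p - 1) = (1 - X) ^ (p - 1) + p u`. Modulo `X ^ p - 1`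
it is the factor by which `(1 - X) ^ (p - 1)` differs from `-p` on the multiples of `1 - X`. -/
noncomputable def fleckUnit : ℤ[X] := (natCast_dvd_geom_sum_sub_one_sub_X_pow p).choose

lemma natCast_mul_fleckUnit :
    (p : ℤ[X]) * fleckUnit p = ∑ i ∈ range p, X ^ i - (1 - X) ^ (p - 1) :=
  (natCast_dvd_geom_sum_sub_one_sub_X_pow p).choose_spec.symm

lemma eval_one_fleckUnit : (fleckUnit p).eval 1 = 1 := by
  have hp1 : p - 1 ≠ 0 := Nat.sub_ne_zero_of_lt hp.out.one_lt
  have h : (p : ℤ) * (fleckUnit p).eval 1 = p * 1 := by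
    simpa [eval_finsetSum, hp1] using congrArg (eval 1) (natCast_mul_fleckUnit p)
  exact mul_left_cancel₀ (by exact_mod_cast hp.out.ne_zero) h

lemma fleckUnit_two : fleckUnit 2 = X := by
  refine mul_left_cancel₀ (two_ne_zero (α := ℤ[X])) ?_
  have h := natCast_mul_fleckUnit 2
  simp only [sum_range_succ, range_zero, sum_empty] at h
  push_cast at h
  linear_combination h

lemma frobeniusDelta_fleckUnit_two : frobeniusDelta 2 (fleckUnit 2) = 0 := by
  have h := natCast_mul_frobeniusDelta 2 (fleckUnit 2)
  rw [fleckUnit_two, expand_X, sub_self] at h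
  rw [fleckUnit_two]
  exact (mul_eq_zero.mp h).resolve_left (by exact_mod_cast two_ne_zero (α := ℤ[X]))

lemma X_pow_sub_one_dvd_fleckUnit_pow_sub :
    X ^ p - 1 ∣ fleckUnit p ^ p - (1 + (p : ℤ[X]) * frobeniusDelta p (fleckUnit p)) := by
  have h := X_pow_sub_one_dvd_expand_sub_C p (fleckUnit p)
  rw [eval_one_fleckUnit, map_one] at h
  rw [natCast_mul_frobeniusDelta]
  convert h using 1
  ring

end FrobeniusLifts

section FleckQuotient

open Polynomial

variable {p : ℕ} [hp : Fact p.Prime]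

lemma X_pow_sub_one_dvd_one_sub_X_pow_sub {i : ℕ} (hi : i ≠ 0) (j : ℕ) :
    X ^ p - 1 ∣ (1 - X) ^ (i + (p - 1) * j) -
      (-(p : ℤ[X])) ^ j * (fleckUnit p ^ j * (1 - X) ^ i) := by
  have hbase : X ^ p - 1 ∣ (1 - X) * ((1 - X) ^ (p - 1) - -(p : ℤ[X]) * fleckUnit p) :=
    ⟨-1, by linear_combination (1 - X) * natCast_mul_fleckUnit p +
      mul_neg_geom_sum (X : ℤ[X]) p⟩
  have hpow := (hbase.trans (mul_dvd_mul_left _ (sub_dvd_pow_sub_pow _ _ j))).mul_left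
    ((1 - X) ^ (i - 1))
  convert hpow using 1
  rw [← mul_assoc ((1 - X) ^ (i - 1)), pow_sub_one_mul hi]
  ring

lemma Fp_eq_residueSum {i : ℕ} (hi : i ≠ 0) (hi' : i ≤ p - 1) (j : ℕ) (r : ℤ) :
    Fp p (i + (p - 1) * j) r = residueSum p r (fleckUnit p ^ j * (1 - X) ^ i) := by
  have hp1 := hp.out.one_lt
  have hfloor : Int.fdiv (((i + (p - 1) * j : ℕ) : ℤ) - 1) ((p : ℤ) - 1) = j := by
    have hsplit : ((i + (p - 1) * j : ℕ) : ℤ) - 1 = (i - 1) + (p - 1) * j := by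
      push_cast [hp1.le]
      ring
    rw [Int.fdiv_eq_ediv_of_nonneg _ (by omega), hsplit, Int.add_mul_ediv_left _ _ (by omega),
      Int.ediv_eq_zero_of_lt (by omega) (by omega), zero_add]
  have hne : (-(p : ℚ)) ^ j ≠ 0 :=
    pow_ne_zero _ (neg_ne_zero.mpr (by exact_mod_cast hp.out.ne_zero))
  rw [Fp, hfloor, if_neg (by omega), add_zero, Cp_eq_residueSum,
    residueSum_congr r (X_pow_sub_one_dvd_one_sub_X_pow_sub hi j), residueSum_neg_natCast_pow_mul,
    zpow_neg, zpow_natCast]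
  push_cast
  exact inv_mul_cancel_left₀ hne _

lemma Fp_zero (r : ℤ) : Fp p 0 r = 1 - p * residueSum p r 1 := by
  have hp1 := hp.out.one_lt
  have hfloor : Int.fdiv (((0 : ℕ) : ℤ) - 1) ((p : ℤ) - 1) = -1 := by
    rw [Int.fdiv_eq_ediv_of_nonneg _ (by omega), Int.ediv_eq_iff_of_pos (by omega)]
    constructor <;> push_cast <;> omega
  rw [Fp, hfloor, Cp_eq_residueSum, pow_zero, if_pos rfl, neg_neg, zpow_one]
  ring

lemma Fp_mul_eq_residueSum (s : ℕ) (r : ℤ) :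
    Fp p ((p - 1) * s) r = 1 - p * residueSum p r (fleckUnit p ^ s) := by
  rcases s with _ | s
  · rw [mul_zero, pow_zero, Fp_zero]
  have hp1 := hp.out.one_lt
  have hcongr : X ^ p - 1 ∣ fleckUnit p ^ s * (1 - X) ^ (p - 1) -
      (∑ i ∈ range p, X ^ i - (p : ℤ[X]) * fleckUnit p ^ (s + 1)) := by
    have h := mul_dvd_mul_left (∑ i ∈ range p, X ^ i : ℤ[X])
      (X_sub_C_dvd_sub_C_eval (a := 1) (p := fleckUnit p ^ s))
    rw [eval_pow, eval_one_fleckUnit, one_pow, map_one, geom_sum_mul] at h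
    convert h using 1
    linear_combination fleckUnit p ^ s * natCast_mul_fleckUnit p
  rw [mul_add_one, add_comm, Fp_eq_residueSum (by omega) le_rfl, residueSum_congr r hcongr, map_sub,
    residueSum_geom_sum p r hp.out.pos, residueSum_natCast_mul]
  push_cast
  rfl

end FleckQuotient

section PadicFiltration

/-- The ideal `p ^ c ℤ_(p)` of the local ring `ℤ_(p)`, as an additive subgroup of `ℚ`. -/
def padicBall (p : ℕ) [Fact p.Prime] (c : ℕ) : AddSubgroup ℚ where
  carrier := {q | padicNorm p q ≤ (p : ℚ) ^ (-c : ℤ)}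
  add_mem' ha hb := padicNorm.nonarchimedean.trans (max_le ha hb)
  zero_mem' := by
    rw [Set.mem_ofPred_eq, padicNorm.zero]
    positivity
  neg_mem' {a} ha := by rwa [Set.mem_ofPred_eq, padicNorm.neg]

variable {p : ℕ} [hp : Fact p.Prime] {c d : ℕ}

lemma mem_padicBall_iff {q : ℚ} : q ∈ padicBall p c ↔ padicNorm p q ≤ (p : ℚ) ^ (-c : ℤ) := Iff.rfl

instance : SetLike.GradedMonoid (padicBall p) where
  one_mem := by simp [mem_padicBall_iff]
  mul_mem _ _ a b ha hb := by
    have hp0 : (p : ℚ) ≠ 0 := by exact_mod_cast hp.out.ne_zero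
    rw [mem_padicBall_iff, padicNorm.mul, Nat.cast_add, neg_add, zpow_add₀ hp0]
    exact mul_le_mul ha hb (padicNorm.nonneg _) (by positivity)

lemma mul_mem_padicBall {a b : ℚ} {i j k : ℕ} (ha : a ∈ padicBall p i)
    (hb : b ∈ padicBall p j) (h : i + j = k := by rfl) : a * b ∈ padicBall p k :=
  h ▸ SetLike.mul_mem_graded ha hb

lemma natCast_mem_padicBall (n : ℕ) : (n : ℚ) ∈ padicBall p 0 :=
  SetLike.natCast_mem_graded (padicBall p) n

lemma intCast_mem_padicBall (z : ℤ) : (z : ℚ) ∈ padicBall p 0 :=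
  SetLike.intCast_mem_graded (padicBall p) z

lemma padicBall_anti (h : c ≤ d) : padicBall p d ≤ padicBall p c := fun _ ha =>
  mem_padicBall_iff.mpr <| (mem_padicBall_iff.mp ha).trans <|
    zpow_le_zpow_right₀ (by exact_mod_cast hp.out.one_lt.le) (by simpa using h)

lemma intCast_mem_padicBall_one {z : ℤ} (h : (p : ℤ) ∣ z) : (z : ℚ) ∈ padicBall p 1 :=
  (padicNorm.dvd_iff_norm_le (n := 1)).mp (by simpa using h)

lemma prime_mul_mem_padicBall_iff {q : ℚ} :
    (p : ℚ) * q ∈ padicBall p (c + 1) ↔ q ∈ padicBall p c := by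
  have hp0 : (0 : ℚ) < p := by exact_mod_cast hp.out.pos
  rw [mem_padicBall_iff, mem_padicBall_iff, padicNorm.mul, padicNorm.padicNorm_p hp.out.one_lt,
    Nat.cast_succ, neg_add_rev, zpow_add₀ hp0.ne', zpow_neg_one,
    mul_le_mul_iff_right₀ (inv_pos.mpr hp0)]

lemma inv_natCast_mem_padicBall {k : ℕ} (hk : ¬p ∣ k) : (k : ℚ)⁻¹ ∈ padicBall p 0 := by
  rw [mem_padicBall_iff, ← one_div, padicNorm.div, (padicNorm.nat_eq_one_iff k).mpr hk]
  simp

lemma inv_factorial_mem_padicBall {k : ℕ} (hk : k < p) : (k.factorial : ℚ)⁻¹ ∈ padicBall p 0 :=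
  inv_natCast_mem_padicBall fun h => hk.not_ge (hp.out.dvd_factorial.mp h)

lemma modCong_of_sub_mem_padicBall {x y : ℚ} (h : x - y ∈ padicBall p c) : modCong p c x y := by
  refine or_iff_not_imp_left.mpr fun hne => ?_
  rw [mem_padicBall_iff, padicNorm.eq_zpow_of_nonzero (sub_ne_zero.mpr hne),
    zpow_le_zpow_iff_right₀ (by exact_mod_cast hp.out.one_lt)] at h
  exact neg_le_neg_iff.mp h

end PadicFiltration

section SeriesFiltration

open PowerSeries

/-- The rational power series whose coefficients of index less than `N` lie in `p ^ c ℤ_(p)`: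
congruence modulo this subgroup is congruence modulo `p ^ c` of truncated series. -/
def seriesBall (p : ℕ) [Fact p.Prime] (N : ℕ) (c : ℕ) : AddSubgroup ℚ⟦X⟧ where
  carrier := {f | ∀ k < N, coeff k f ∈ padicBall p c}
  add_mem' {f g} hf hg k hk := by rw [map_add]; exact add_mem (hf k hk) (hg k hk)
  zero_mem' k _ := by rw [map_zero]; exact zero_mem _
  neg_mem' {f} hf k hk := by rw [map_neg]; exact neg_mem (hf k hk)

variable {p : ℕ} [hp : Fact p.Prime] {N M : ℕ} {c d : ℕ} {f g : ℚ⟦X⟧}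

instance : SetLike.GradedMonoid (seriesBall p N) where
  one_mem k _ := by
    rw [coeff_one]
    split_ifs
    exacts [SetLike.one_mem_graded _, zero_mem _]
  mul_mem _ _ f g hf hg k hk := by
    rw [coeff_mul]
    refine sum_mem fun x hx => ?_
    rw [HasAntidiagonal.mem_antidiagonal] at hx
    exact mul_mem_padicBall (hf _ (by omega)) (hg _ (by omega))

lemma mul_mem_seriesBall {i j k : ℕ} (hf : f ∈ seriesBall p N i) (hg : g ∈ seriesBall p N j)
    (h : i + j = k := by rfl) : f * g ∈ seriesBall p N k :=
  h ▸ SetLike.mul_mem_graded hf hg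

lemma one_mem_seriesBall : (1 : ℚ⟦X⟧) ∈ seriesBall p N 0 := SetLike.one_mem_graded _

lemma pow_mem_seriesBall (hf : f ∈ seriesBall p N 0) (n : ℕ) : f ^ n ∈ seriesBall p N 0 :=
  pow_mem (S := SetLike.GradeZero.subring (seriesBall p N)) hf n

lemma seriesBall_anti_left (h : M ≤ N) : seriesBall p N c ≤ seriesBall p M c :=
  fun _ hf k hk => hf k (hk.trans_le h)

lemma seriesBall_anti_right (h : c ≤ d) : seriesBall p N d ≤ seriesBall p N c :=
  fun _ hf k hk => padicBall_anti h (hf k hk)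

lemma coeff_natCast_mul (n k : ℕ) (f : ℚ⟦X⟧) : coeff k ((n : ℚ⟦X⟧) * f) = n * coeff k f := by
  rw [← map_natCast (C (R := ℚ)), coeff_C_mul]

lemma prime_mul_mem_seriesBall_iff :
    (p : ℚ⟦X⟧) * f ∈ seriesBall p N (c + 1) ↔ f ∈ seriesBall p N c :=
  forall₂_congr fun k _ => by rw [coeff_natCast_mul, prime_mul_mem_padicBall_iff]

lemma X_pow_mul_mem_seriesBall (f : ℚ⟦X⟧) : X ^ N * f ∈ seriesBall p N c := fun k hk => by
  rw [coeff_X_pow_mul', if_neg hk.not_ge]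
  exact zero_mem _

lemma rescale_mem_seriesBall {e : ℕ} (hf : f ∈ seriesBall p N c) (he : X ^ e ∣ f)
    (h : e + c = d := by rfl) : rescale (p : ℚ) f ∈ seriesBall p N d := fun k hk => by
  subst h
  rw [coeff_rescale]
  rcases lt_or_ge k e with hke | hke
  · rw [X_pow_dvd_iff.mp he k hke, mul_zero]
    exact zero_mem _
  · have hpk := SetLike.pow_mem_graded k
      (intCast_mem_padicBall_one (p := p) (dvd_refl (p : ℤ)))
    refine padicBall_anti ?_ (SetLike.mul_mem_graded hpk (hf k hk))
    simpa using hke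

lemma mem_seriesBall_of_mul_eq_one (hf : f ∈ seriesBall p N 0) (hf0 : constantCoeff f = 1)
    (hfg : f * g = 1) : g ∈ seriesBall p N 0 := by
  obtain ⟨q, hq⟩ : X ∣ 1 - f := X_dvd_iff.mpr (by simp [hf0])
  have hg : g = ∑ i ∈ range N, (1 - f) ^ i + X ^ N * (q ^ N * g) := by
    rw [← mul_assoc, ← mul_pow, ← hq]
    linear_combination (-g) * mul_neg_geom_sum (1 - f) N + (∑ i ∈ range N, (1 - f) ^ i) * hfg
  rw [hg]
  exact add_mem (sum_mem fun i _ => pow_mem_seriesBall (sub_mem one_mem_seriesBall hf) _)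
    (X_pow_mul_mem_seriesBall _)

lemma pow_sub_pow_mem_seriesBall (hf : f ∈ seriesBall p N 0) (hg : g ∈ seriesBall p N 0)
    (h : f - g ∈ seriesBall p N c) (n : ℕ) : f ^ n - g ^ n ∈ seriesBall p N c := by
  rw [← geom_sum₂_mul]
  exact mul_mem_seriesBall (sum_mem fun i _ =>
    mul_mem_seriesBall (pow_mem_seriesBall hf _) (pow_mem_seriesBall hg _)) h
    (zero_add c)

lemma pow_prime_sub_pow_prime_mem_seriesBall (hf : f ∈ seriesBall p N 0)
    (hg : g ∈ seriesBall p N 0) (h : f - g ∈ seriesBall p N 1) :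
    f ^ p - g ^ p ∈ seriesBall p N 2 := by
  have hsum : ∑ i ∈ range p, f ^ i * g ^ (p - 1 - i) ∈ seriesBall p N 1 := by
    have hsplit : ∑ i ∈ range p, f ^ i * g ^ (p - 1 - i) =
        ∑ i ∈ range p, (f ^ i - g ^ i) * g ^ (p - 1 - i) + p * g ^ (p - 1) := by
      rw [← nsmul_eq_mul, ← card_range p, ← sum_const, card_range, ← sum_add_distrib]
      refine sum_congr rfl fun i hi => ?_
      rw [← pow_mul_pow_sub g (Nat.le_sub_one_of_lt (mem_range.mp hi))]
      ring
    rw [hsplit]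
    exact add_mem (sum_mem fun i _ => mul_mem_seriesBall
      (pow_sub_pow_mem_seriesBall hf hg h i) (pow_mem_seriesBall hg _))
      (prime_mul_mem_seriesBall_iff.mpr (pow_mem_seriesBall hg _))
  rw [← geom_sum₂_mul]
  exact mul_mem_seriesBall hsum h

lemma pow_sub_pow_mem_seriesBall_of_modEq (hf : f ∈ seriesBall p N 0)
    (h : f ^ p - 1 ∈ seriesBall p N c) {a b : ℕ} (hab : a ≡ b [MOD p]) :
    f ^ a - f ^ b ∈ seriesBall p N c := by
  have hmod (n : ℕ) : f ^ n - f ^ (n % p) ∈ seriesBall p N c := by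
    have h' := mul_mem_seriesBall (pow_mem_seriesBall hf (n % p))
      (pow_sub_pow_mem_seriesBall (pow_mem_seriesBall hf p) one_mem_seriesBall h (n / p))
      (zero_add c)
    rwa [mul_sub, ← pow_mul, ← pow_add, Nat.mod_add_div, one_pow, mul_one] at h'
  have h' := sub_mem (hmod a) (hmod b)
  rwa [hab, sub_sub_sub_cancel_right] at h'

lemma derivative_mem_seriesBall (hf : f ∈ seriesBall p N c) :
    d⁄dX ℚ f ∈ seriesBall p (N - 1) c := fun k hk => by
  rw [coeff_derivative, ← Nat.cast_add_one]
  exact mul_mem_padicBall (hf _ (by omega)) (natCast_mem_padicBall _) (add_zero c)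

lemma mem_seriesBall_of_derivative_mem (hN : N ≤ p) (hf0 : constantCoeff f ∈ padicBall p c)
    (hf : d⁄dX ℚ f ∈ seriesBall p (N - 1) c) : f ∈ seriesBall p N c := by
  rintro (_ | k) hk
  · simpa using hf0
  · have hinv := inv_natCast_mem_padicBall (p := p) (k := k + 1)
      fun hd => (Nat.le_of_dvd k.succ_pos hd).not_gt (by omega)
    have h := mul_mem_padicBall (hf k (by omega)) hinv (add_zero c)
    rwa [coeff_derivative, Nat.cast_add_one, mul_inv_cancel_right₀ (by positivity)] at h

-- Formally `f = exp M`, so `f ^ p = exp (p M)`. Comparing derivatives proves this modulo `p` and,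
-- inserted into the same differential equation, modulo `p ^ 2`: below `X ^ p`, integration only
-- divides by units.
lemma pow_prime_sub_one_add_mem_seriesBall {M : ℚ⟦X⟧} (hN : N ≤ p) (hf : f ∈ seriesBall p N 0)
    (hf0 : constantCoeff f = 1) (hM : M ∈ seriesBall p N 0) (hM0 : constantCoeff M = 0)
    (hfM : d⁄dX ℚ f = f * d⁄dX ℚ M) : f ^ p - (1 + p * M) ∈ seriesBall p N 2 := by
  have hderiv : d⁄dX ℚ (f ^ p) = p * (f ^ p * d⁄dX ℚ M) := by
    rw [derivative_pow, hfM, ← pow_sub_one_mul hp.out.ne_zero f]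
    ring
  have hderiv' : d⁄dX ℚ (f ^ p - (1 + p * M)) = p * ((f ^ p - 1) * d⁄dX ℚ M) := by
    rw [map_sub, hderiv, map_add, derivative_one, ← nsmul_eq_mul p M, map_nsmul, nsmul_eq_mul]
    ring
  have hM' := derivative_mem_seriesBall hM
  have hone : f ^ p - 1 ∈ seriesBall p N 1 := by
    refine mem_seriesBall_of_derivative_mem hN (by simp [hf0]) ?_
    rw [map_sub, hderiv, derivative_one, sub_zero]
    exact prime_mul_mem_seriesBall_iff.mpr (mul_mem_seriesBall
      (seriesBall_anti_left (N.sub_le 1) (pow_mem_seriesBall hf p)) hM')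
  refine mem_seriesBall_of_derivative_mem hN (by simp [hf0, hM0]) ?_
  rw [hderiv']
  exact prime_mul_mem_seriesBall_iff.mpr
    (mul_mem_seriesBall (seriesBall_anti_left (N.sub_le 1) hone) hM')

end SeriesFiltration

section DifferenceQuotient

open Polynomial

variable {p : ℕ} [hp : Fact p.Prime]

lemma prime_pow_div_mem_padicBall (hp2 : p ≠ 2) (k : ℕ) :
    (p : ℚ) ^ (k + 1) / (k + 2 : ℕ) ∈ padicBall p 1 := by
  obtain ⟨e, t, ht, hk⟩ :=
    Nat.exists_eq_pow_mul_and_not_dvd (n := k + 2) (by omega) p hp.out.ne_one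
  have hp0 : (p : ℚ) ≠ 0 := by exact_mod_cast hp.out.ne_zero
  have hp3 : 3 ≤ p := by have := hp.out.two_le; omega
  have he : e ≤ k := by
    by_contra! hke
    have hgrowth : k < 3 ^ k := Nat.lt_pow_self (by norm_num)
    have hle : 3 ^ (k + 1) ≤ k + 2 :=
      (Nat.pow_le_pow_right three_pos hke).trans <| (Nat.pow_le_pow_left hp3 e).trans <|
        Nat.le_of_dvd (by omega) ⟨t, hk⟩
    omega
  have hsplit : (p : ℚ) ^ (k + 1) / (k + 2 : ℕ) = p * ((p ^ (k - e) : ℕ) * (t : ℚ)⁻¹) := by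
    rw [hk, pow_succ', ← pow_mul_pow_sub (p : ℚ) he]
    push_cast
    field_simp
  rw [hsplit, prime_mul_mem_padicBall_iff]
  exact mul_mem_padicBall (natCast_mem_padicBall _) (inv_natCast_mem_padicBall ht)

lemma map_one_add_natCast_mul_pow_sub_div {R : Type*} [CommRing R] (φ : R →ₗ[ℤ] ℤ) {q : ℕ}
    (hq : q ≠ 0) (v f : R) (s : ℕ) :
    ((φ ((1 + q * v) ^ (s + 1) * f) : ℚ) - φ f) / (q * (s + 1 : ℕ)) =
      ∑ k ∈ range (s + 1), s.choose k * ((q : ℚ) ^ k / (k + 1 : ℕ)) * φ (v ^ (k + 1) * f) := by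
  have hterm (k : ℕ) : φ (((q : R) * v) ^ k * 1 ^ (s + 1 - k) * ((s + 1).choose k : R) * f) =
      ((s + 1).choose k * q ^ k : ℕ) * φ (v ^ k * f) := by
    rw [← nsmul_eq_mul ((s + 1).choose k * q ^ k), ← map_nsmul, nsmul_eq_mul]
    congr 1
    push_cast
    ring
  have hq0 : (q : ℚ) ≠ 0 := by exact_mod_cast hq
  rw [add_comm 1, add_pow, sum_mul, map_sum, sum_congr rfl fun k _ => hterm k,
    sum_range_succ' _ (s + 1), div_eq_iff (mul_ne_zero hq0 (by positivity)), sum_mul]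
  push_cast
  simp only [Nat.choose_zero_right, Nat.cast_one, pow_zero, one_mul, add_sub_cancel_right]
  refine sum_congr rfl fun k _ => ?_
  have hchoose : ((s : ℚ) + 1) * s.choose k = (s + 1).choose (k + 1) * (k + 1) := by
    exact_mod_cast Nat.add_one_mul_choose_eq s k
  have hk : (k : ℚ) + 1 ≠ 0 := by positivity
  field_simp
  linear_combination -(q : ℚ) ^ (k + 1) * φ (v ^ (k + 1) * f) * hchoose

lemma map_one_add_prime_mul_pow_sub_div_sub_mem_padicBall {R : Type*} [CommRing R]
    (φ : R →ₗ[ℤ] ℤ) (hp2 : p ≠ 2) {s : ℕ} (hs : s ≠ 0) (v f : R) :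
    ((φ ((1 + p * v) ^ s * f) : ℚ) - φ f) / (p * s) - φ (v * f) ∈ padicBall p 1 := by
  obtain ⟨s, rfl⟩ := Nat.exists_eq_succ_of_ne_zero hs
  rw [Nat.succ_eq_add_one, map_one_add_natCast_mul_pow_sub_div φ hp.out.ne_zero, sum_range_succ']
  simp only [zero_add, Nat.choose_zero_right, Nat.cast_one, pow_zero, div_one, one_mul, pow_one,
    add_sub_cancel_right]
  exact sum_mem fun k _ => mul_mem_padicBall (mul_mem_padicBall (natCast_mem_padicBall _)
    (prime_pow_div_mem_padicBall hp2 k)) (intCast_mem_padicBall _)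

lemma residueSum_fleckUnit_pow_sub_div_sub_mem_padicBall {s : ℕ} (hs : s ≠ 0) (r : ℤ)
    (f : ℤ[X]) :
    ((residueSum p r (fleckUnit p ^ (p * s) * f) : ℚ) - residueSum p r f) / (p * s) -
      residueSum p r (frobeniusDelta p (fleckUnit p) * f) ∈ padicBall p 1 := by
  have hcongr : X ^ p - 1 ∣ fleckUnit p ^ (p * s) * f -
      (1 + (p : ℤ[X]) * frobeniusDelta p (fleckUnit p)) ^ s * f := by
    rw [← sub_mul, pow_mul]
    exact ((X_pow_sub_one_dvd_fleckUnit_pow_sub p).trans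
      (sub_dvd_pow_sub_pow _ _ s)).mul_right f
  rw [residueSum_congr r hcongr]
  rcases eq_or_ne p 2 with rfl | hp2
  · simp [frobeniusDelta_fleckUnit_two, zero_mem]
  · exact map_one_add_prime_mul_pow_sub_div_sub_mem_padicBall _ hp2 hs _ _

end DifferenceQuotient

section ExponentialSeries

open PowerSeries

/-- The series `(e^X - 1) / X`. -/
noncomputable def expQuotient : ℚ⟦X⟧ := mk fun k => ((k + 1).factorial : ℚ)⁻¹

/-- The series `∑_{k ≥ 2} B_k X ^ k / (k * k!)`, that is `log ((e^X - 1) / X) - X / 2`. -/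
noncomputable def bernoulliLog : ℚ⟦X⟧ :=
  mk fun k => if k < 2 then 0 else bernoulli k / (k * k.factorial)

/-- The value `f(e^X)` of an integral polynomial at the exponential series. -/
noncomputable def evalExp : Polynomial ℤ →ₐ[ℤ] ℚ⟦X⟧ := Polynomial.aeval (exp ℚ)

lemma evalExp_X : evalExp Polynomial.X = exp ℚ := Polynomial.aeval_X _

lemma constantCoeff_evalExp (f : Polynomial ℤ) : constantCoeff (evalExp f) = (f.eval 1 : ℤ) := by
  rw [evalExp, Polynomial.aeval_eq_sum_range, Polynomial.eval_eq_sum_range, map_sum]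
  simp [constantCoeff_exp]

lemma evalExp_expand (n : ℕ) (f : Polynomial ℤ) :
    evalExp (Polynomial.expand ℤ n f) = rescale (n : ℚ) (evalExp f) := by
  rw [evalExp, Polynomial.expand_aeval, exp_pow_eq_rescale_exp, Polynomial.aeval_def,
    Polynomial.aeval_def, Polynomial.hom_eval₂]
  exact congrArg (Polynomial.eval₂ · _ f) (RingHom.ext_int _ _)

lemma X_mul_expQuotient : X * expQuotient = exp ℚ - 1 := by
  ext (_ | k)
  · simp
  · simp [expQuotient, coeff_succ_X_mul, coeff_exp, coeff_one]

lemma constantCoeff_expQuotient : constantCoeff expQuotient = 1 := by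
  rw [← coeff_zero_eq_constantCoeff_apply, expQuotient, coeff_mk]
  simp

lemma bernoulliPowerSeries_mul_expQuotient : bernoulliPowerSeries ℚ * expQuotient = 1 := by
  refine mul_left_cancel₀ (X_ne_zero (R := ℚ)) ?_
  linear_combination bernoulliPowerSeries_mul_exp_sub_one ℚ +
    bernoulliPowerSeries ℚ * X_mul_expQuotient

lemma geom_sum_exp (n : ℕ) :
    ∑ i ∈ range n, exp ℚ ^ i =
      (n : ℚ⟦X⟧) * (bernoulliPowerSeries ℚ * rescale (n : ℚ) expQuotient) := by
  have hpow : exp ℚ ^ n - 1 = (n : ℚ⟦X⟧) * (X * rescale (n : ℚ) expQuotient) := by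
    have h := congrArg (rescale (n : ℚ)) X_mul_expQuotient
    rw [map_mul, rescale_X, map_sub, map_one, ← exp_pow_eq_rescale_exp, map_natCast] at h
    rw [← h, mul_assoc]
  have hgeom := geom_sum_mul (exp ℚ) n
  rw [hpow, ← X_mul_expQuotient] at hgeom
  refine mul_left_cancel₀ (X_ne_zero (R := ℚ)) ?_
  linear_combination bernoulliPowerSeries ℚ * hgeom -
    X * (∑ i ∈ range n, exp ℚ ^ i) * bernoulliPowerSeries_mul_expQuotient

lemma constantCoeff_bernoulliPowerSeries : constantCoeff (bernoulliPowerSeries ℚ) = 1 := by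
  simp [bernoulliPowerSeries]

lemma constantCoeff_bernoulliLog : constantCoeff bernoulliLog = 0 := by
  rw [← coeff_zero_eq_constantCoeff_apply, bernoulliLog, coeff_mk, if_pos two_pos]

lemma X_mul_derivative_bernoulliLog :
    X * d⁄dX ℚ bernoulliLog = bernoulliPowerSeries ℚ - 1 + C (1 / 2) * X := by
  ext (_ | _ | k)
  · simp [bernoulliPowerSeries]
  · norm_num [bernoulliPowerSeries, bernoulliLog, coeff_succ_X_mul, coeff_derivative, coeff_one]
  · have hright : coeff (k + 2) (bernoulliPowerSeries ℚ - 1 + C (1 / 2) * X) =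
        bernoulli (k + 2) / ((k + 2).factorial : ℚ) := by
      simp [bernoulliPowerSeries, coeff_one]
    rw [hright, coeff_succ_X_mul, coeff_derivative, bernoulliLog, coeff_mk, if_neg (by omega)]
    push_cast
    field_simp

lemma X_mul_derivative_bernoulliPowerSeries :
    X * d⁄dX ℚ (bernoulliPowerSeries ℚ) = bernoulliPowerSeries ℚ -
      bernoulliPowerSeries ℚ ^ 2 - X * bernoulliPowerSeries ℚ := by
  have h := bernoulliPowerSeries_mul_exp_sub_one ℚ
  have h' := congrArg (d⁄dX ℚ) h
  rw [Derivation.leibniz, map_sub, derivative_exp, derivative_one, derivative_X] at h'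
  simp only [smul_eq_mul, sub_zero] at h'
  linear_combination bernoulliPowerSeries ℚ * h' -
    (d⁄dX ℚ (bernoulliPowerSeries ℚ) + bernoulliPowerSeries ℚ) * h

lemma derivative_bernoulliPowerSeries :
    d⁄dX ℚ (bernoulliPowerSeries ℚ) =
      bernoulliPowerSeries ℚ * d⁄dX ℚ (-(bernoulliLog + C (1 / 2) * X)) := by
  have hC : d⁄dX ℚ (C (1 / 2) * X) = C (1 / 2) := by
    rw [← smul_eq_C_mul, Derivation.map_smul, derivative_X, smul_eq_C_mul, mul_one]
  have htwo : (C (1 / 2) : ℚ⟦X⟧) * 2 = 1 := by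
    rw [← map_ofNat (C (R := ℚ)), ← map_mul]
    norm_num
  rw [map_neg, map_add, hC]
  refine mul_left_cancel₀ (X_ne_zero (R := ℚ)) ?_
  linear_combination X_mul_derivative_bernoulliPowerSeries + X * bernoulliPowerSeries ℚ * htwo +
    bernoulliPowerSeries ℚ * X_mul_derivative_bernoulliLog

lemma X_sq_dvd_bernoulliPowerSeries_sub :
    X ^ 2 ∣ bernoulliPowerSeries ℚ - 1 + C (1 / 2) * X := by
  rw [X_pow_dvd_iff]
  intro k hk
  interval_cases k <;> norm_num [bernoulliPowerSeries, coeff_one]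

variable {p : ℕ} [hp : Fact p.Prime]

lemma rescale_exp_mem_seriesBall (z : ℤ) : rescale (z : ℚ) (exp ℚ) ∈ seriesBall p p 0 :=
  fun k hk => by
    rw [coeff_rescale, coeff_exp, ← Int.cast_pow]
    exact mul_mem_padicBall (intCast_mem_padicBall _)
      (by simpa using inv_factorial_mem_padicBall hk)

lemma evalExp_mem_seriesBall (f : Polynomial ℤ) : evalExp f ∈ seriesBall p p 0 := by
  have hexp : exp ℚ ∈ seriesBall p p 0 := by simpa using rescale_exp_mem_seriesBall (p := p) 1
  rw [evalExp, Polynomial.aeval_eq_sum_range]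
  exact sum_mem fun i _ => zsmul_mem (pow_mem_seriesBall hexp _) _

lemma expQuotient_mem_seriesBall : expQuotient ∈ seriesBall p (p - 1) 0 := fun k hk => by
  rw [expQuotient, coeff_mk]
  exact inv_factorial_mem_padicBall (by omega)

lemma bernoulliPowerSeries_mem_seriesBall : bernoulliPowerSeries ℚ ∈ seriesBall p (p - 1) 0 :=
  mem_seriesBall_of_mul_eq_one expQuotient_mem_seriesBall constantCoeff_expQuotient
    ((mul_comm _ _).trans bernoulliPowerSeries_mul_expQuotient)

lemma half_mul_X_mem_seriesBall : C (1 / 2) * X ∈ seriesBall p (p - 1) 0 := by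
  rintro (_ | _ | k) hk
  · simp [zero_mem]
  · have hhalf := inv_natCast_mem_padicBall (p := p) (k := 2)
      (Nat.not_dvd_of_pos_of_lt two_pos (by omega))
    simpa using hhalf
  · simp [zero_mem]

lemma bernoulliLog_mem_seriesBall : bernoulliLog ∈ seriesBall p (p - 1) 0 := by
  have hneg : -(bernoulliLog + C (1 / 2) * X) ∈ seriesBall p (p - 1) 0 := by
    refine mem_seriesBall_of_derivative_mem (p.sub_le 1)
      (by simp [constantCoeff_bernoulliLog, zero_mem]) ?_
    have h : d⁄dX ℚ (-(bernoulliLog + C (1 / 2) * X)) =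
        expQuotient * d⁄dX ℚ (bernoulliPowerSeries ℚ) := by
      linear_combination -expQuotient * derivative_bernoulliPowerSeries -
        d⁄dX ℚ (-(bernoulliLog + C (1 / 2) * X)) * bernoulliPowerSeries_mul_expQuotient
    rw [h]
    exact mul_mem_seriesBall
      (seriesBall_anti_left (Nat.sub_le _ 1) expQuotient_mem_seriesBall)
      (derivative_mem_seriesBall bernoulliPowerSeries_mem_seriesBall)
  simpa using sub_mem (neg_mem hneg) (half_mul_X_mem_seriesBall (p := p))

lemma bernoulliPowerSeries_pow_prime_sub_mem_seriesBall :
    bernoulliPowerSeries ℚ ^ p - (1 + (p : ℚ⟦X⟧) * -(bernoulliLog + C (1 / 2) * X)) ∈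
      seriesBall p (p - 1) 2 :=
  pow_prime_sub_one_add_mem_seriesBall (p.sub_le 1) bernoulliPowerSeries_mem_seriesBall
    constantCoeff_bernoulliPowerSeries
    (neg_mem (add_mem bernoulliLog_mem_seriesBall half_mul_X_mem_seriesBall))
    (by simp [constantCoeff_bernoulliLog]) derivative_bernoulliPowerSeries

end ExponentialSeries

section FleckUnitSeries

open PowerSeries

variable {p : ℕ} [hp : Fact p.Prime]

lemma rescale_expQuotient_sub_one_mem_seriesBall :
    rescale (p : ℚ) expQuotient - 1 ∈ seriesBall p (p - 1) 1 := by
  have hX : X ^ 1 ∣ expQuotient - 1 := by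
    rw [pow_one, X_dvd_iff, map_sub, constantCoeff_expQuotient, map_one, sub_self]
  simpa using rescale_mem_seriesBall (sub_mem expQuotient_mem_seriesBall one_mem_seriesBall) hX

lemma evalExp_fleckUnit_sub_mem_seriesBall :
    evalExp (fleckUnit p) - bernoulliPowerSeries ℚ ∈ seriesBall p (p - 1) 1 := by
  have hmul := congrArg evalExp (natCast_mul_fleckUnit p)
  simp only [map_mul, map_natCast, map_sub, map_sum, map_pow, map_one, evalExp_X] at hmul
  have hpow : (1 - exp ℚ) ^ (p - 1) = X ^ (p - 1) * (-expQuotient) ^ (p - 1) := by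
    rw [← mul_pow, mul_neg, X_mul_expQuotient, neg_sub]
  have hdiff : (p : ℚ⟦X⟧) * (evalExp (fleckUnit p) - bernoulliPowerSeries ℚ) =
      (p : ℚ⟦X⟧) * (bernoulliPowerSeries ℚ * (rescale (p : ℚ) expQuotient - 1)) -
        X ^ (p - 1) * (-expQuotient) ^ (p - 1) := by
    rw [mul_sub, hmul, geom_sum_exp, hpow]
    ring
  rw [← prime_mul_mem_seriesBall_iff, hdiff]
  exact sub_mem (prime_mul_mem_seriesBall_iff.mpr <| mul_mem_seriesBall
    bernoulliPowerSeries_mem_seriesBall rescale_expQuotient_sub_one_mem_seriesBall)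
    (X_pow_mul_mem_seriesBall _)

lemma rescale_evalExp_fleckUnit_sub_mem_seriesBall :
    rescale (p : ℚ) (evalExp (fleckUnit p)) - (1 - (p : ℚ⟦X⟧) * (C (1 / 2) * X)) ∈
      seriesBall p (p - 1) 2 := by
  have hX : X ^ 1 ∣ evalExp (fleckUnit p) - bernoulliPowerSeries ℚ := by
    rw [pow_one, X_dvd_iff, map_sub, constantCoeff_evalExp, eval_one_fleckUnit,
      constantCoeff_bernoulliPowerSeries, Int.cast_one, sub_self]
  have hlin : rescale (p : ℚ) (evalExp (fleckUnit p) - bernoulliPowerSeries ℚ) ∈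
      seriesBall p (p - 1) 2 := rescale_mem_seriesBall evalExp_fleckUnit_sub_mem_seriesBall hX
  have hquad : rescale (p : ℚ) (bernoulliPowerSeries ℚ - 1 + C (1 / 2) * X) ∈
      seriesBall p (p - 1) 2 := rescale_mem_seriesBall
    (add_mem (sub_mem bernoulliPowerSeries_mem_seriesBall one_mem_seriesBall)
      half_mul_X_mem_seriesBall) X_sq_dvd_bernoulliPowerSeries_sub
  have hscale : rescale (p : ℚ) (C (1 / 2) * X) = (p : ℚ⟦X⟧) * (C (1 / 2) * X) := by
    have hC := RingHom.congr_fun (RingHom.ext_rat ((rescale (p : ℚ)).comp C) C) (1 / 2)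
    rw [RingHom.comp_apply] at hC
    rw [map_mul, hC, rescale_X, map_natCast, mul_left_comm]
  rw [map_sub] at hlin
  rw [map_add, map_sub, map_one, hscale] at hquad
  convert add_mem hlin hquad using 1
  ring

lemma evalExp_frobeniusDelta_fleckUnit_add_mem_seriesBall :
    evalExp (frobeniusDelta p (fleckUnit p)) + bernoulliLog ∈ seriesBall p (p - 1) 1 := by
  have hmul := congrArg evalExp (natCast_mul_frobeniusDelta p (fleckUnit p))
  simp only [map_mul, map_natCast, map_sub, map_pow, evalExp_expand] at hmul
  have hpow := pow_prime_sub_pow_prime_mem_seriesBall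
    (seriesBall_anti_left (p.sub_le 1) (evalExp_mem_seriesBall (fleckUnit p)))
    bernoulliPowerSeries_mem_seriesBall evalExp_fleckUnit_sub_mem_seriesBall
  have h := sub_mem (add_mem hpow bernoulliPowerSeries_pow_prime_sub_mem_seriesBall)
    rescale_evalExp_fleckUnit_sub_mem_seriesBall
  rw [← prime_mul_mem_seriesBall_iff]
  convert h using 1
  linear_combination hmul

end FleckUnitSeries

section CoefficientExtraction

open PowerSeries

variable {p : ℕ} [hp : Fact p.Prime]

lemma indicator_sub_mem_padicBall_one (x : ℤ) :
    (if x % p = 0 then 1 else 0 : ℚ) - (1 + (x : ℚ) ^ (p - 1) / (p - 1).factorial) ∈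
      padicBall p 1 := by
  have hp1 : p - 1 ≠ 0 := Nat.sub_ne_zero_of_lt hp.out.one_lt
  have hfac : ((p - 1).factorial : ℚ) ≠ 0 := by positivity
  have hzero : x % p = 0 ↔ (x : ZMod p) = 0 := by
    rw [ZMod.intCast_zmod_eq_zero_iff_dvd, Int.dvd_iff_emod_eq_zero]
  have hdvd : (p : ℤ) ∣ ((if x % p = 0 then 1 else 0) - 1) * (p - 1).factorial - x ^ (p - 1) := by
    rw [← ZMod.intCast_zmod_eq_zero_iff_dvd]
    push_cast
    rw [ZMod.wilsons_lemma, if_congr hzero rfl rfl]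
    split_ifs with hx
    · simp [hx, hp1]
    · simp [ZMod.pow_card_sub_one_eq_one hx]
  have h := mul_mem_padicBall (intCast_mem_padicBall_one hdvd)
    (inv_factorial_mem_padicBall (Nat.sub_lt hp.out.pos one_pos)) (add_zero 1)
  convert h using 1
  push_cast
  field_simp
  ring

lemma residueSum_sub_coeff_mem_padicBall (r : ℤ) (f : Polynomial ℤ) :
    (residueSum p r f : ℚ) - (coeff 0 (rescale (-(r : ℚ)) (exp ℚ) * evalExp f) +
      coeff (p - 1) (rescale (-(r : ℚ)) (exp ℚ) * evalExp f)) ∈ padicBall p 1 := by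
  induction f using Polynomial.induction_on' with
  | add f g hf hg =>
    convert add_mem hf hg using 1
    simp only [map_add, mul_add, Int.cast_add]
    ring
  | monomial k c =>
    have hexp : rescale (-(r : ℚ)) (exp ℚ) * evalExp (Polynomial.monomial k c) =
        C (c : ℚ) * rescale (((k : ℤ) - r : ℤ) : ℚ) (exp ℚ) := by
      rw [← Polynomial.C_mul_X_pow_eq_monomial, map_mul, map_pow, evalExp_X,
        exp_pow_eq_rescale_exp, eq_intCast, map_intCast, map_intCast, mul_left_comm,
        exp_mul_exp_eq_exp_add]
      congr 3
      push_cast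
      ring
    convert mul_mem_padicBall (intCast_mem_padicBall c)
      (indicator_sub_mem_padicBall_one (p := p) ((k : ℤ) - r)) using 1
    rw [hexp, coeff_C_mul, coeff_C_mul, coeff_rescale, coeff_rescale, coeff_exp, coeff_exp,
      residueSum_monomial]
    simp only [map_one, map_div₀, map_natCast, Nat.factorial_zero, Nat.cast_one, pow_zero]
    split_ifs <;> push_cast <;> ring

lemma neg_one_pow_sub_mem_padicBall_one {i b : ℕ} (hib : i + b = p - 1) :
    ((-1) ^ i - (-1) ^ b : ℚ) ∈ padicBall p 1 := by
  have hfermat : (p : ℤ) ∣ (-1) ^ (p - 1) - 1 := (Int.modEq_iff_dvd.mp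
    (Int.ModEq.pow_card_sub_one_eq_one hp.out (isCoprime_one_left.neg_left)).symm)
  have hdvd : (p : ℤ) ∣ (-1) ^ i - (-1) ^ b := by
    have h := hfermat.mul_left ((-1) ^ b)
    rwa [← hib, mul_sub, mul_one, ← pow_add, add_left_comm, ← two_mul, pow_add, pow_mul,
      neg_one_sq, one_pow, mul_one] at h
  exact_mod_cast intCast_mem_padicBall_one hdvd

lemma rescale_neg_exp_mem_seriesBall (r : ℤ) :
    rescale (-(r : ℚ)) (exp ℚ) ∈ seriesBall p (p - 1) 0 := by
  simpa using seriesBall_anti_left (p.sub_le 1) (rescale_exp_mem_seriesBall (p := p) (-r))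

lemma residueSum_mul_one_sub_X_pow_sub_mem_padicBall {i b : ℕ} (hi : i ≠ 0)
    (hib : i + b = p - 1) (r : ℤ) (f : Polynomial ℤ) :
    (residueSum p r (f * (1 - Polynomial.X) ^ i) : ℚ) - (-1) ^ b *
      coeff b (rescale (-(r : ℚ)) (exp ℚ) * (evalExp f * expQuotient ^ i)) ∈ padicBall p 1 := by
  set g := rescale (-(r : ℚ)) (exp ℚ) * (evalExp f * expQuotient ^ i) with hg
  have hgmem : g ∈ seriesBall p (p - 1) 0 := mul_mem_seriesBall
    (rescale_neg_exp_mem_seriesBall r) (mul_mem_seriesBall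
      (seriesBall_anti_left (p.sub_le 1) (evalExp_mem_seriesBall f))
      (pow_mem_seriesBall expQuotient_mem_seriesBall i))
  have hshift : rescale (-(r : ℚ)) (exp ℚ) * evalExp (f * (1 - Polynomial.X) ^ i) =
      X ^ i * (C ((-1) ^ i) * g) := by
    rw [map_mul, map_pow, map_sub, map_one, evalExp_X, ← neg_sub (exp ℚ), ← X_mul_expQuotient,
      neg_pow, mul_pow, hg, map_pow, map_neg, map_one]
    ring
  have h := residueSum_sub_coeff_mem_padicBall (p := p) r (f * (1 - Polynomial.X) ^ i)
  rw [hshift, coeff_X_pow_mul', if_neg (by omega), coeff_X_pow_mul', if_pos (by omega),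
    Nat.sub_eq_of_eq_add' hib.symm, coeff_C_mul, zero_add] at h
  convert add_mem h (mul_mem_padicBall (neg_one_pow_sub_mem_padicBall_one hib)
    (hgmem b (by omega))) using 1
  ring

lemma evalExp_fleckUnit_pow_mul_expQuotient_pow_sub_mem_seriesBall {i j μ : ℕ}
    (hj : j ≡ μ + i [MOD p]) :
    evalExp (fleckUnit p) ^ j * expQuotient ^ i - bernoulliPowerSeries ℚ ^ μ ∈
      seriesBall p (p - 1) 1 := by
  have hB := bernoulliPowerSeries_mem_seriesBall (p := p)
  have hBp : bernoulliPowerSeries ℚ ^ p - 1 ∈ seriesBall p (p - 1) 1 := by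
    convert add_mem (seriesBall_anti_right one_le_two
      bernoulliPowerSeries_pow_prime_sub_mem_seriesBall)
      (prime_mul_mem_seriesBall_iff.mpr (neg_mem (add_mem bernoulliLog_mem_seriesBall
        (half_mul_X_mem_seriesBall (p := p))))) using 1
    ring
  have hpow := add_mem (pow_sub_pow_mem_seriesBall
      (seriesBall_anti_left (p.sub_le 1) (evalExp_mem_seriesBall _)) hB
      evalExp_fleckUnit_sub_mem_seriesBall j)
    (pow_sub_pow_mem_seriesBall_of_modEq hB hBp hj)
  have hcancel : (bernoulliPowerSeries ℚ ^ i * expQuotient ^ i : ℚ⟦X⟧) = 1 := by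
    rw [← mul_pow, bernoulliPowerSeries_mul_expQuotient, one_pow]
  convert mul_mem_seriesBall hpow (pow_mem_seriesBall expQuotient_mem_seriesBall i) using 1
  linear_combination bernoulliPowerSeries ℚ ^ μ * hcancel

lemma residueSum_frobeniusDelta_mul_add_coeff_mem_padicBall {i j b μ : ℕ} (hi : i ≠ 0)
    (hib : i + b = p - 1) (hj : j ≡ μ + i [MOD p]) (r : ℤ) :
    (residueSum p r (frobeniusDelta p (fleckUnit p) *
        (fleckUnit p ^ j * (1 - Polynomial.X) ^ i)) : ℚ) +
      (-1) ^ b * coeff b (bernoulliLog *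
        (rescale (-(r : ℚ)) (exp ℚ) * bernoulliPowerSeries ℚ ^ μ)) ∈ padicBall p 1 := by
  set v := frobeniusDelta p (fleckUnit p)
  set R := rescale (-(r : ℚ)) (exp ℚ)
  set P := evalExp (fleckUnit p) ^ j * expQuotient ^ i
  have hseries : R * ((evalExp v + bernoulliLog) * P -
      bernoulliLog * (P - bernoulliPowerSeries ℚ ^ μ)) ∈ seriesBall p (p - 1) 1 := by
    refine mul_mem_seriesBall (rescale_neg_exp_mem_seriesBall r) (sub_mem ?_ ?_) (zero_add 1)
    · exact mul_mem_seriesBall evalExp_frobeniusDelta_fleckUnit_add_mem_seriesBall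
        (mul_mem_seriesBall (pow_mem_seriesBall (seriesBall_anti_left (p.sub_le 1)
          (evalExp_mem_seriesBall _)) j) (pow_mem_seriesBall expQuotient_mem_seriesBall i))
    · exact mul_mem_seriesBall bernoulliLog_mem_seriesBall
        (evalExp_fleckUnit_pow_mul_expQuotient_pow_sub_mem_seriesBall hj) (zero_add 1)
  have hsplit : R * (evalExp (v * fleckUnit p ^ j) * expQuotient ^ i) =
      R * ((evalExp v + bernoulliLog) * P - bernoulliLog * (P - bernoulliPowerSeries ℚ ^ μ)) -
        bernoulliLog * (R * bernoulliPowerSeries ℚ ^ μ) := by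
    rw [map_mul, map_pow]
    ring
  have h := residueSum_mul_one_sub_X_pow_sub_mem_padicBall hi hib r (v * fleckUnit p ^ j)
  rw [hsplit, map_sub] at h
  have hsign : ((-1) ^ b : ℚ) ∈ padicBall p 0 := by
    exact_mod_cast intCast_mem_padicBall ((-1) ^ b)
  convert add_mem h (mul_mem_padicBall hsign (hseries b (by omega))) using 1
  rw [mul_assoc v]
  ring

end CoefficientExtraction

section BernoulliCoefficients

open PowerSeries

lemma coeff_bernoulliPowerSeries_pow (μ k : ℕ) :
    coeff k (bernoulliPowerSeries ℚ ^ μ) = bernHigher μ k / k.factorial := by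
  have hk : (k.factorial : ℚ) ≠ 0 := by positivity
  have hpow : bernoulliPowerSeries ℚ ^ μ = ∏ _j : Fin μ, bernoulliPowerSeries ℚ := by simp
  rw [hpow, coeff_prod, bernHigher, mul_div_cancel_left₀ _ hk]
  refine sum_equiv Finsupp.equivFunOnFinite (fun l => ?_) fun l _ => ?_
  · simp [mem_finsuppAntidiag, Nat.mem_antidiagonalTuple]
  · simp [bernoulliPowerSeries]

lemma coeff_rescale_exp_mul_bernoulliPowerSeries_pow (μ k : ℕ) (t : ℚ) :
    coeff k (rescale t (exp ℚ) * bernoulliPowerSeries ℚ ^ μ) =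
      bernHigherPoly μ k t / k.factorial := by
  rw [mul_comm, coeff_mul, Nat.sum_antidiagonal_eq_sum_range_succ_mk, bernHigherPoly, sum_div]
  refine sum_congr rfl fun j hj => ?_
  have hfac : (k.factorial : ℚ) ≠ 0 := by positivity
  rw [coeff_bernoulliPowerSeries_pow, coeff_rescale, coeff_exp,
    Nat.cast_choose ℚ (Nat.lt_succ_iff.mp (mem_range.mp hj)), map_div₀, map_one, map_natCast]
  field_simp

lemma coeff_bernoulliLog_mul (μ b : ℕ) (t : ℚ) :
    coeff b (bernoulliLog * (rescale t (exp ℚ) * bernoulliPowerSeries ℚ ^ μ)) =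
      1 / (b.factorial : ℚ) * ∑ k ∈ Icc 2 b,
        (b.choose k : ℚ) * (bernoulli k / (k : ℚ)) * bernHigherPoly μ (b - k) t := by
  have hsub : Icc 2 b ⊆ range b.succ := fun k hk =>
    mem_range.mpr (Nat.lt_succ_of_le (mem_Icc.mp hk).2)
  rw [coeff_mul, Nat.sum_antidiagonal_eq_sum_range_succ_mk, mul_sum]
  refine (sum_subset_zero_on_sdiff hsub (fun k hk => ?_) fun k hk => ?_).symm
  · have hk2 : k < 2 := by
      simp only [mem_sdiff, mem_range, mem_Icc] at hk
      omega
    rw [bernoulliLog, coeff_mk, if_pos hk2, zero_mul]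
  · obtain ⟨hk2, hkb⟩ := mem_Icc.mp hk
    have hfac : (b.factorial : ℚ) ≠ 0 := by positivity
    have hk0 : (k : ℚ) ≠ 0 := by exact_mod_cast (two_pos.trans_le hk2).ne'
    rw [coeff_rescale_exp_mul_bernoulliPowerSeries_pow, bernoulliLog, coeff_mk,
      if_neg hk2.not_gt, Nat.cast_choose ℚ hkb]
    field_simp

end BernoulliCoefficients

section FleckQuotientDifference

open PowerSeries

lemma nUp_eq_of_modEq {p m n : ℕ} (h : (m : ℤ) ≡ n [ZMOD (p : ℤ) - 1]) : nUp p m = nUp p n :=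
  congrArg Int.toNat h.neg

variable {p : ℕ} [hp : Fact p.Prime]

lemma natCast_nUp (n : ℕ) : (nUp p n : ℤ) = -(n : ℤ) % ((p : ℤ) - 1) :=
  Int.toNat_of_nonneg (Int.emod_nonneg _ (by have := hp.out.one_lt; omega))

lemma nUp_lt (n : ℕ) : nUp p n < p - 1 := by
  have hp1 := hp.out.one_lt
  have h := Int.emod_lt_of_pos (-(n : ℤ)) (b := (p : ℤ) - 1) (by omega)
  rw [← natCast_nUp] at h
  omega

lemma sub_one_dvd_add_nUp (n : ℕ) : p - 1 ∣ n + nUp p n := by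
  have h := (Int.dvd_self_sub_emod (x := -(n : ℤ)) (m := (p : ℤ) - 1)).neg_right
  rw [neg_sub, sub_neg_eq_add, add_comm, ← natCast_nUp, ← Nat.cast_pred hp.out.pos] at h
  exact_mod_cast h

lemma exists_eq_add_sub_one_mul {n : ℕ} (hn : n ≠ 0) :
    ∃ i j, i ≠ 0 ∧ i + nUp p n = p - 1 ∧ n = i + (p - 1) * j := by
  have hlt := nUp_lt (p := p) n
  obtain ⟨_ | j, hj⟩ := sub_one_dvd_add_nUp (p := p) n
  · omega
  · rw [mul_add_one] at hj
    exact ⟨p - 1 - nUp p n, j, by omega, by omega, by omega⟩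

lemma div_prime_sub_one_sub_mem_padicBall {x y : ℚ} {z : ℤ} (hx : x - z ∈ padicBall p 1)
    (hy : z + y ∈ padicBall p 1) : x / ((p : ℚ) - 1) - y ∈ padicBall p 1 := by
  have hp1 := hp.out.one_lt
  have hinv : ((p : ℚ) - 1)⁻¹ ∈ padicBall p 0 := by
    rw [← Nat.cast_pred hp.out.pos]
    exact inv_natCast_mem_padicBall (Nat.not_dvd_of_pos_of_lt (by omega) (by omega))
  have hp1' : (p : ℚ) - 1 ≠ 0 := sub_ne_zero.mpr (by exact_mod_cast hp1.ne')
  have hz := prime_mul_mem_padicBall_iff.mpr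
    (mul_mem_padicBall hinv (intCast_mem_padicBall (p := p) z))
  convert sub_mem (add_mem (mul_mem_padicBall hinv hx) hz) hy using 1
  field_simp
  ring

lemma Fp_add_sub_div_sub_mem_padicBall_of_ne_zero {n s μ : ℕ} (hn : n ≠ 0) (hs : s ≠ 0)
    (hμ : (μ : ℤ) ≡ -(n : ℤ) [ZMOD p]) (r : ℤ) :
    (Fp p (n + (p - 1) * (p * s)) r - Fp p n r) / (p * s) / ((p : ℚ) - 1) - (-1) ^ nUp p n *
      coeff (nUp p n) (bernoulliLog *
        (rescale (-(r : ℚ)) (exp ℚ) * bernoulliPowerSeries ℚ ^ μ)) ∈ padicBall p 1 := by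
  obtain ⟨i, j, hi, hib, hij⟩ := exists_eq_add_sub_one_mul (p := p) hn
  have hj : j ≡ μ + i [MOD p] := by
    obtain ⟨c, hc⟩ := hμ.symm.dvd
    refine Int.natCast_modEq_iff.mp (Int.modEq_iff_dvd.mpr ⟨c - j, ?_⟩)
    rw [hij] at hc
    push_cast [hp.out.one_le] at hc ⊢
    linear_combination hc
  have hFp (k : ℕ) : Fp p (n + (p - 1) * k) r =
      residueSum p r (fleckUnit p ^ k * (fleckUnit p ^ j * (1 - Polynomial.X) ^ i)) := by
    rw [hij, add_assoc, ← mul_add, Fp_eq_residueSum hi (by omega), add_comm j, pow_add, mul_assoc]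
  have hFp0 := hFp 0
  rw [mul_zero, add_zero, pow_zero, one_mul] at hFp0
  rw [hFp, hFp0]
  exact div_prime_sub_one_sub_mem_padicBall
    (residueSum_fleckUnit_pow_sub_div_sub_mem_padicBall hs _ _)
    (residueSum_frobeniusDelta_mul_add_coeff_mem_padicBall hi hib hj r)

lemma Fp_sub_one_mul_sub_div_mem_padicBall {s : ℕ} (hs : s ≠ 0) (r : ℤ) :
    (Fp p ((p - 1) * (p * s)) r - Fp p 0 r) / (p * s) ∈ padicBall p 1 := by
  have h := add_mem (padicBall_anti zero_le_one
    (residueSum_fleckUnit_pow_sub_div_sub_mem_padicBall (p := p) hs r 1))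
    (intCast_mem_padicBall (residueSum p r (frobeniusDelta p (fleckUnit p) * 1)))
  rw [sub_add_cancel, mul_one] at h
  convert neg_mem (prime_mul_mem_padicBall_iff.mpr h) using 1
  rw [Fp_mul_eq_residueSum, Fp_zero]
  ring

lemma Fp_sub_div_sub_mem_padicBall {m n μ : ℕ} (hlt : n < m)
    (h : (m : ℤ) ≡ n [ZMOD (p : ℤ) * ((p : ℤ) - 1)]) (hμ : (μ : ℤ) ≡ -(n : ℤ) [ZMOD p])
    (r : ℤ) :
    (Fp p m r - Fp p n r) / ((m : ℚ) - n) - (-1) ^ nUp p n *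
      coeff (nUp p n) (bernoulliLog *
        (rescale (-(r : ℚ)) (exp ℚ) * bernoulliPowerSeries ℚ ^ μ)) ∈ padicBall p 1 := by
  obtain ⟨s, hs, rfl⟩ : ∃ s, s ≠ 0 ∧ m = n + (p - 1) * (p * s) := by
    rw [← Nat.cast_pred hp.out.pos, ← Nat.cast_mul, Int.natCast_modEq_iff] at h
    obtain ⟨s, hs⟩ := (Nat.modEq_iff_dvd' hlt.le).mp h.symm
    refine ⟨s, ?_, by rw [mul_left_comm, ← mul_assoc, ← hs, Nat.add_sub_cancel' hlt.le]⟩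
    rintro rfl
    omega
  have hstep : ((n + (p - 1) * (p * s) : ℕ) : ℚ) - n = p * s * ((p : ℚ) - 1) := by
    push_cast [hp.out.one_le]
    ring
  rw [hstep, ← div_div]
  rcases eq_or_ne n 0 with rfl | hn
  · have hzero : nUp p 0 = 0 := by simp [nUp]
    rw [zero_add, hzero]
    refine div_prime_sub_one_sub_mem_padicBall (z := 0)
      (by simpa using Fp_sub_one_mul_sub_div_mem_padicBall hs r) ?_
    simp [constantCoeff_bernoulliLog, zero_mem]
  · exact Fp_add_sub_div_sub_mem_padicBall_of_ne_zero hn hs hμ r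

end FleckQuotientDifference

theorem stmt1_general {p : ℕ} [Fact p.Prime] {m n μ : ℕ} (hmn : m ≠ n)
    (hcong : (m : ℤ) ≡ n [ZMOD (p : ℤ) * ((p : ℤ) - 1)]) (hμ : (μ : ℤ) ≡ -(n : ℤ) [ZMOD p])
    (r : ℤ) :
    modCong p 1 ((Fp p m r - Fp p n r) / ((m : ℚ) - n))
      ((-1 : ℚ) ^ nUp p n / ((nUp p n).factorial : ℚ) *
        ∑ k ∈ Icc 2 (nUp p n), ((nUp p n).choose k : ℚ) * (bernoulli k / (k : ℚ)) *
          bernHigherPoly μ (nUp p n - k) (-(r : ℚ))) := by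
  rw [div_eq_mul_one_div ((-1 : ℚ) ^ nUp p n), mul_assoc, ← coeff_bernoulliLog_mul]
  refine modCong_of_sub_mem_padicBall (c := 1) ?_
  rcases hmn.lt_or_gt with hlt | hlt
  · rw [← nUp_eq_of_modEq (hcong.of_mul_left _), ← neg_sub (Fp p n r), ← neg_sub (n : ℚ),
      neg_div_neg_eq]
    exact Fp_sub_div_sub_mem_padicBall hlt hcong.symm
      (hμ.trans (hcong.of_mul_right _).symm.neg) r
  · exact Fp_sub_div_sub_mem_padicBall hlt hcong hμ r

theorem stmt1 (p : ℕ) (hp : p.Prime) (r : ℤ) (m n : ℕ) (hmn : m ≠ n)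
    (hcong : (m : ℤ) ≡ (n : ℤ) [ZMOD ((p:ℤ) * ((p:ℤ) - 1))])
    (μ : ℕ) (hμ : μ < p) (hμ2 : (μ : ℤ) ≡ -(n:ℤ) [ZMOD (p:ℤ)]) :
    modCong p 1 ((Fp p m r - Fp p n r) / ((m:ℚ) - (n:ℚ)))
      ((-1:ℚ)^(nUp p n) / ((nUp p n).factorial : ℚ) *
        ∑ k ∈ Finset.Icc 2 (nUp p n),
          ((nUp p n).choose k : ℚ) * (bernoulli k / (k:ℚ)) *
            bernHigherPoly μ (nUp p n - k) (-(r:ℚ))) := by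
  have : Fact p.Prime := ⟨hp⟩
  exact stmt1_general hmn hcong hμ2 r
end
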